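/- The map φ_{K,N} : C_F(N, d_K) → C(N·O_K) sending the class [Q] to the ray class [[ω_Q, 1]_F] is surjective. Consequently, φ_{K,N} is a bijection, and C_F(N,d_K) inherits a group structure isomorphic to the ray class group C(N·O_K). -/

import Mathlib

open NumberField Complex

noncomputable section

def iota (F K : Type) [Field F] [Field K] [NumberField F] [Algebra F K]
    (u : 𝓞 F) : K := algebraMap F K (u : F)

def IsGammaN (F : Type) [Field F] [NumberField F] (τ : F →+* ℝ) (N : ℕ)
    (γ : Matrix (Fin 2) (Fin 2) (𝓞 F)) : Prop :=
  IsUnit γ.det ∧ 0 < τ (γ.det : F) ∧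
    (N : 𝓞 F) ∣ γ 1 0 ∧ ∃ ζ : (𝓞 F)ˣ, (N : 𝓞 F) ∣ (γ 1 1 - (ζ : 𝓞 F))

def FormAct (F : Type) [Field F] [NumberField F]
    (γ : Matrix (Fin 2) (Fin 2) (𝓞 F)) (a b c a' b' c' : 𝓞 F) : Prop :=
  γ.det * a' = a * γ 0 0 ^ 2 + b * γ 0 0 * γ 1 0 + c * γ 1 0 ^ 2 ∧
  γ.det * b' = 2 * a * γ 0 0 * γ 0 1 + b * (γ 0 0 * γ 1 1 + γ 0 1 * γ 1 0)
      + 2 * c * γ 1 0 * γ 1 1 ∧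
  γ.det * c' = a * γ 0 1 ^ 2 + b * γ 0 1 * γ 1 1 + c * γ 1 1 ^ 2

def IsFormN (F : Type) [Field F] [NumberField F] (τ : F →+* ℝ) (N : ℕ)
    (dK : 𝓞 F) (a b c : 𝓞 F) : Prop :=
  (∀ d : 𝓞 F, d ∣ a → d ∣ b → d ∣ c → IsUnit d) ∧
  0 < τ (a : F) ∧
  b ^ 2 - 4 * a * c = dK ∧
  (∀ d : 𝓞 F, d ∣ a → d ∣ (N : 𝓞 F) → IsUnit d)

/-- `ω` is the root of `Q(x,1)` lying in the upper half-plane (via the fixed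
embedding `σ : K → ℂ`). -/
def IsFormRoot (F K : Type) [Field F] [Field K] [NumberField F] [Algebra F K]
    (σ : K →+* ℂ) (a b c : 𝓞 F) (ω : K) : Prop :=
  iota F K a * ω ^ 2 + iota F K b * ω + iota F K c = 0 ∧ 0 < (σ ω).im

/-- Multiplicative congruence `ν ≡* 1 (mod N·O_K)`. -/
def MulCongOne (K : Type) [Field K] [NumberField K] (N : ℕ) (ν : K) : Prop :=
  ∃ α β : 𝓞 K, (β : K) ≠ 0 ∧
    IsCoprime (Ideal.span {β}) (Ideal.span {(N : 𝓞 K)}) ∧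
    ν = (α : K) / (β : K) ∧ (N : 𝓞 K) ∣ (α - β)

/-- A fractional ideal `I` is relatively prime to `N·O_K`. -/
def CoprimeToN (K : Type) [Field K] [NumberField K] (N : ℕ)
    (I : FractionalIdeal (nonZeroDivisors (𝓞 K)) K) : Prop :=
  ∃ b₁ b₂ : Ideal (𝓞 K),
    IsCoprime b₁ (Ideal.span {(N : 𝓞 K)}) ∧
    IsCoprime b₂ (Ideal.span {(N : 𝓞 K)}) ∧
    I * (b₂ : FractionalIdeal (nonZeroDivisors (𝓞 K)) K)
      = (b₁ : FractionalIdeal (nonZeroDivisors (𝓞 K)) K)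

/-! Write `θ = ω_K`, so that `O_K = O_F θ + O_F`. A root `ω` in the upper half-plane of a form
`(a, b, c)` of discriminant `d_K` satisfies `θ = a ω + B` for some `B` in `O_F`; hence `[ω, 1]` is
stable under `θ`, which acts on it by a matrix from which `(a, b, c)` can be read off.

Surjectivity: multiplying by some `β ≡ 1` makes the given ideal an integral ideal `J` prime to
`N`. As `O_F` is principal, `J` is free of rank two, and an element of `J` congruent to `1` modulo
`N` has coordinates that are coprime together with `N`; they can be changed modulo `N` into a
unimodular row. So `J = [m, l]` with `l ≡ 1`, and the matrix of `θ` on `[m, l]` gives the form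
with root `m / l`.

Injectivity: an equality `[ω, 1] = ν [ω', 1]` is given by a matrix in `GL₂(O_F)` intertwining the
two actions of `θ`, and this says that it carries one form to the other. Its bottom row `(r, s)`
satisfies `ν (r ω' + s) = 1` with `ν ≡* 1`; since `a'` is prime to `N`, comparing coordinates in
the basis `(θ, 1)` yields `N ∣ r` and `N ∣ s - 1`. -/

section Unimodular

variable {R : Type*} [CommRing R]

theorem exists_isCoprime_add_mul [IsDomain R] [IsPrincipalIdealRing R] {x : R} (hx : x ≠ 0)
    (y n : R) (h : ∀ d, d ∣ x → d ∣ y → d ∣ n → IsUnit d) : ∃ t, IsCoprime x (y + n * t) := by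
  induction x using UniqueFactorizationMonoid.induction_on_prime with
  | h₁ => exact absurd rfl hx
  | h₂ x hxunit => exact ⟨0, isCoprime_one_left.of_isCoprime_of_dvd_left hxunit.dvd⟩
  | h₃ x p hx₀ hp ih =>
    obtain ⟨t, hxt⟩ := ih hx₀ fun d hd ↦ h d (hd.mul_left p)
    by_cases hpt : p ∣ y + n * t
    · have hpnx : ¬p ∣ n * x := fun hpnx ↦ (hp.dvd_or_dvd hpnx).elim
        (fun hpn ↦ hp.not_isUnit <|
          h p (dvd_mul_right p x) ((dvd_add_left (hpn.mul_right t)).1 hpt) hpn)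
        (fun hpx ↦ hp.not_isUnit <| hxt.isUnit_of_dvd' hpx hpt)
      have hshift : y + n * (t + x) = y + n * t + n * x := by ring
      refine ⟨t + x, hshift ▸ IsCoprime.mul_left ?_ (hxt.add_mul_right_right n)⟩
      exact hp.coprime_iff_not_dvd.2 fun hp' ↦ hpnx <| (dvd_add_right hpt).1 hp'
    · exact ⟨t, (hp.coprime_iff_not_dvd.2 hpt).mul_left hxt⟩

theorem exists_isCoprime_add_mul_add_mul [IsDomain R] [IsPrincipalIdealRing R] {x y n : R}
    (h : ∀ d, d ∣ x → d ∣ y → d ∣ n → IsUnit d) :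
    ∃ s t, IsCoprime (x + n * s) (y + n * t) := by
  by_cases hx : x + n = 0
  · have hxy : IsRelPrime x y := fun d hdx hdy ↦
      h d hdx hdy ((dvd_add_right hdx).1 (hx ▸ dvd_zero d))
    exact ⟨0, 0, by simpa using hxy.isCoprime⟩
  · obtain ⟨t, ht⟩ := exists_isCoprime_add_mul hx y n fun d hdx hdy hdn ↦
      h d ((dvd_add_left hdn).1 hdx) hdy hdn
    exact ⟨1, t, by simpa using ht⟩

theorem span_pair_eq_of_mul_add_mul_eq_one {M : Type*} [AddCommGroup M] [Module R M] (e f : M)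
    {p q x y : R} (h : p * x + q * y = 1) :
    Submodule.span R {p • f - q • e, x • e + y • f} = Submodule.span R {e, f} := by
  apply le_antisymm <;> rw [Submodule.span_le, Set.pair_subset_iff] <;>
    simp only [SetLike.mem_coe, Submodule.mem_span_pair]
  · exact ⟨⟨-q, p, by module⟩, ⟨x, y, rfl⟩⟩
  · constructor
    · refine ⟨-y, p, ?_⟩
      match_scalars
      · ring
      · linear_combination h
    · refine ⟨x, q, ?_⟩
      match_scalars
      · linear_combination h
      · ring

end Unimodular

section MatrixAction

variable {R A n : Type*} [CommRing R] [CommRing A] [Algebra R A] [Fintype n]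

open Matrix

theorem matrix_eq_of_map_mulVec_eq {v : n → A} (hv : LinearIndependent R v)
    {P Q : Matrix n n R} (h : P.map (algebraMap R A) *ᵥ v = Q.map (algebraMap R A) *ᵥ v) :
    P = Q := by
  ext i j
  refine congrFun (hv.fintypeLinearCombination_injective ?_) j
  simpa [Matrix.mulVec, dotProduct, Fintype.linearCombination_apply, Algebra.smul_def]
    using congrFun h i

theorem exists_map_mulVec_eq_of_span_le {v w : n → A}
    (h : Submodule.span R (Set.range v) ≤ Submodule.span R (Set.range w)) :
    ∃ P : Matrix n n R, P.map (algebraMap R A) *ᵥ w = v := by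
  have hmem (i : n) : ∃ c : n → R, ∑ j, c j • w j = v i :=
    (Submodule.mem_span_range_iff_exists_fun R).1 (h (Submodule.subset_span ⟨i, rfl⟩))
  choose P hP using hmem
  exact ⟨Matrix.of P, funext fun i ↦ by
    simpa [Matrix.mulVec, dotProduct, Algebra.smul_def] using hP i⟩

theorem exists_isUnit_det_map_mulVec_eq_of_span_eq [DecidableEq n] {v w : n → A}
    (hv : LinearIndependent R v)
    (h : Submodule.span R (Set.range v) = Submodule.span R (Set.range w)) :
    ∃ P : Matrix n n R, IsUnit P.det ∧ P.map (algebraMap R A) *ᵥ w = v := by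
  obtain ⟨P, hP⟩ := exists_map_mulVec_eq_of_span_le h.le
  obtain ⟨Q, hQ⟩ := exists_map_mulVec_eq_of_span_le h.ge
  have hPQ : P * Q = 1 := matrix_eq_of_map_mulVec_eq hv <| by
    rw [Matrix.map_mul, ← Matrix.mulVec_mulVec, hQ, hP]
    simp
  exact ⟨P, Matrix.isUnit_det_of_right_inverse hPQ, hP⟩

theorem span_range_pair_one_eq {ω ω' ν : A}
    (h : ∀ x : A, (∃ u v : R, x = algebraMap R A u * ω + algebraMap R A v) ↔
      ∃ u v : R, x = ν * (algebraMap R A u * ω' + algebraMap R A v)) :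
    Submodule.span R (Set.range ![ω, 1]) = Submodule.span R (Set.range (ν • ![ω', 1])) := by
  ext x
  simp only [smul_cons, smul_empty, range_cons_cons_empty, Submodule.mem_span_pair]
  simpa only [Algebra.smul_def, Algebra.algebraMap_self, RingHom.id_apply, mul_one, mul_add,
    mul_left_comm ν, mul_comm ν (algebraMap _ _ _), eq_comm (a := x)] using h x

end MatrixAction

section UpperHalfPlane

open Matrix

theorem im_mul_normSq_eq_det_mul_im {p q r s : ℝ} {z w : ℂ} (h : z * (r * w + s) = p * w + q) :
    z.im * normSq (r * w + s) = (p * s - q * r) * w.im := by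
  have hre := congrArg re h
  have him := congrArg im h
  simp only [mul_re, mul_im, add_re, add_im, ofReal_re, ofReal_im, zero_mul, sub_zero, add_zero]
    at hre him
  simp only [normSq_apply, mul_re, mul_im, add_re, add_im, ofReal_re, ofReal_im, zero_mul,
    sub_zero, add_zero]
  linear_combination (r * w.re + s) * him - r * w.im * hre

theorem det_pos_of_mul_eq {p q r s : ℝ} {z w : ℂ} (hz : 0 < z.im) (hw : 0 < w.im)
    (h : z * (r * w + s) = p * w + q) (hden : (r * w + s : ℂ) ≠ 0) : 0 < p * s - q * r :=
  pos_of_mul_pos_left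
    (im_mul_normSq_eq_det_mul_im h ▸ mul_pos hz (normSq_pos.2 hden)) hw.le

variable {R K : Type*} [CommRing R] [Field K] [Algebra R K] {σ : K →+* ℂ} {τ : R →+* ℝ}

theorem im_map_algebraMap_mul_add (hστ : ∀ x, σ (algebraMap R K x) = τ x) (u v : R) (z : K) :
    (σ (algebraMap R K u * z + algebraMap R K v)).im = τ u * (σ z).im := by
  simp [hστ]

theorem two_mul_root_add_eq_of_discr_eq (hστ : ∀ x, σ (algebraMap R K x) = τ x)
    {a b c a' b' c' : R} {ω ω' : K} (hdiscr : b ^ 2 - 4 * a * c = b' ^ 2 - 4 * a' * c')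
    (hroot : algebraMap R K a * ω ^ 2 + algebraMap R K b * ω + algebraMap R K c = 0)
    (hroot' : algebraMap R K a' * ω' ^ 2 + algebraMap R K b' * ω' + algebraMap R K c' = 0)
    (ha : 0 < τ a) (ha' : 0 < τ a') (hω : 0 < (σ ω).im) (hω' : 0 < (σ ω').im) :
    2 * algebraMap R K a * ω + algebraMap R K b =
      2 * algebraMap R K a' * ω' + algebraMap R K b' := by
  have hsq : (2 * algebraMap R K a * ω + algebraMap R K b) ^ 2 =
      (2 * algebraMap R K a' * ω' + algebraMap R K b') ^ 2 := by
    have hdiscrK := congrArg (algebraMap R K) hdiscr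
    simp only [map_sub, map_mul, map_pow, map_ofNat] at hdiscrK
    linear_combination 4 * algebraMap R K a * hroot - 4 * algebraMap R K a' * hroot' + hdiscrK
  refine (sq_eq_sq_iff_eq_or_eq_neg.1 hsq).resolve_right fun hneg ↦ ?_
  have him := congrArg (fun z ↦ (σ z).im) hneg
  have hcoe (u v : R) (z : K) : (σ (2 * algebraMap R K u * z + algebraMap R K v)).im =
      2 * (τ u * (σ z).im) := by
    rw [← map_ofNat (algebraMap R K) 2, ← map_mul, im_map_algebraMap_mul_add hστ, map_mul,
      map_ofNat, mul_assoc]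
  simp only [map_neg, neg_im, hcoe] at him
  linarith [mul_pos ha hω, mul_pos ha' hω']

theorem linearIndependent_pair_one_of_im_ne_zero [FaithfulSMul R K]
    (hστ : ∀ x, σ (algebraMap R K x) = τ x) {z : K} (hz : (σ z).im ≠ 0) :
    LinearIndependent R ![z, 1] := by
  have hτ : Function.Injective τ := fun x y hxy ↦
    FaithfulSMul.algebraMap_injective R K <| σ.injective <| by rw [hστ, hστ, hxy]
  refine LinearIndependent.pair_iff.2 fun u v huv ↦ ?_
  rw [Algebra.smul_def, Algebra.smul_def, mul_one] at huv
  have hu : u = 0 := by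
    have him := im_map_algebraMap_mul_add hστ u v z
    rw [huv, map_zero, zero_im, eq_comm, mul_eq_zero, or_iff_left hz] at him
    exact (map_eq_zero_iff τ hτ).1 him
  refine ⟨hu, FaithfulSMul.algebraMap_injective R K ?_⟩
  simpa [hu] using huv

theorem mul_add_eq_of_map_mulVec_smul_eq {P : Matrix (Fin 2) (Fin 2) R} {w z ν : K}
    (hP : P.map (algebraMap R K) *ᵥ (ν • ![w, 1]) = ![z, 1]) :
    ν * (algebraMap R K (P 0 0) * w + algebraMap R K (P 0 1)) = z ∧
      ν * (algebraMap R K (P 1 0) * w + algebraMap R K (P 1 1)) = 1 := by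
  rw [mulVec_smul] at hP
  exact ⟨by simpa [mulVec, dotProduct] using congrFun hP 0,
    by simpa [mulVec, dotProduct] using congrFun hP 1⟩

theorem det_pos_of_map_mulVec_smul_eq (hστ : ∀ x, σ (algebraMap R K x) = τ x)
    {P : Matrix (Fin 2) (Fin 2) R} {w z ν : K} (hz : 0 < (σ z).im) (hw : 0 < (σ w).im)
    (hP : P.map (algebraMap R K) *ᵥ (ν • ![w, 1]) = ![z, 1]) : 0 < τ P.det := by
  obtain ⟨hnum, hden⟩ := mul_add_eq_of_map_mulVec_smul_eq hP
  have hmoebius : z * (algebraMap R K (P 1 0) * w + algebraMap R K (P 1 1)) =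
      algebraMap R K (P 0 0) * w + algebraMap R K (P 0 1) := by
    rw [← hnum]
    linear_combination (algebraMap R K (P 0 0) * w + algebraMap R K (P 0 1)) * hden
  have hσ := congrArg σ hmoebius
  have hσden := (map_ne_zero σ).2 (right_ne_zero_of_mul_eq_one hden)
  simp only [map_add, map_mul, hστ] at hσ hσden
  simpa only [det_fin_two, map_sub, map_mul] using det_pos_of_mul_eq hz hw hσ hσden

end UpperHalfPlane

section CoprimeIdeal

open scoped nonZeroDivisors

variable {R : Type*} [CommRing R]

theorem isCoprime_span_singleton_iff {J : Ideal R} {n : R} :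
    IsCoprime J (Ideal.span {n}) ↔ ∃ g ∈ J, n ∣ g - 1 := by
  rw [Ideal.isCoprime_iff_exists]
  constructor
  · rintro ⟨g, hg, t, ht, hgt⟩
    refine ⟨g, hg, ?_⟩
    rw [← hgt, sub_add_cancel_left]
    exact (Ideal.mem_span_singleton.1 ht).neg_right
  · rintro ⟨g, hg, hn⟩
    exact ⟨g, hg, 1 - g, Ideal.mem_span_singleton.2 (dvd_sub_comm.1 hn), by ring⟩

theorem exists_spanSingleton_mul_eq_coeIdeal [IsDomain R] {K : Type*} [Field K] [Algebra R K]
    [IsFractionRing R K] {n : R} {I : FractionalIdeal R⁰ K} {b₁ b₂ : Ideal R}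
    (hb₁ : IsCoprime b₁ (Ideal.span {n})) (hb₂ : IsCoprime b₂ (Ideal.span {n}))
    (hI : I * b₂ = b₁) :
    ∃ (β : R) (J : Ideal R), β ≠ 0 ∧ n ∣ β - 1 ∧ IsCoprime J (Ideal.span {n}) ∧
      FractionalIdeal.spanSingleton R⁰ (algebraMap R K β) * I = J := by
  by_cases hn : IsUnit n
  · exact ⟨I.den, I.num, nonZeroDivisors.ne_zero I.den.2, hn.dvd,
      isCoprime_span_singleton_iff.2 ⟨0, zero_mem _, hn.dvd⟩, I.den_mul_self_eq_num'⟩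
  obtain ⟨β, hβb₂, hβ⟩ := isCoprime_span_singleton_iff.1 hb₂
  obtain ⟨g, hgb₁, hg⟩ := isCoprime_span_singleton_iff.1 hb₁
  have hβ0 : β ≠ 0 := by
    rintro rfl
    exact hn (isUnit_of_dvd_one (by simpa using hβ))
  have hβI : FractionalIdeal.spanSingleton R⁰ (algebraMap R K β) * I ≤ 1 := by
    have hβ_le : FractionalIdeal.spanSingleton R⁰ (algebraMap R K β) ≤ b₂ :=
      FractionalIdeal.spanSingleton_le_iff_mem.2 (FractionalIdeal.mem_coeIdeal_of_mem _ hβb₂)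
    calc FractionalIdeal.spanSingleton R⁰ (algebraMap R K β) * I
        ≤ b₂ * I := by gcongr
      _ = b₁ := by rw [mul_comm, hI]
      _ ≤ 1 := FractionalIdeal.coeIdeal_le_one
  obtain ⟨J, hJ⟩ := FractionalIdeal.le_one_iff_exists_coeIdeal.1 hβI
  refine ⟨β, J, hβ0, hβ, isCoprime_span_singleton_iff.2 ⟨β * g, ?_, ?_⟩, hJ.symm⟩
  · have hgI : algebraMap R K g ∈ I := by
      have hb₁I : (b₁ : FractionalIdeal R⁰ K) ≤ I :=
        hI ▸ mul_le_of_le_one_right' FractionalIdeal.coeIdeal_le_one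
      exact hb₁I (FractionalIdeal.mem_coeIdeal_of_mem _ hgb₁)
    have hβg : algebraMap R K (β * g) ∈ (J : FractionalIdeal R⁰ K) := by
      rw [hJ, map_mul]
      exact FractionalIdeal.mul_mem_mul (FractionalIdeal.mem_spanSingleton_self _ _) hgI
    obtain ⟨x, hxJ, hx⟩ := (FractionalIdeal.mem_coeIdeal _).1 hβg
    exact IsFractionRing.injective R K hx ▸ hxJ
  · have hsplit : β * g - 1 = (β - 1) * g + (g - 1) := by ring
    exact hsplit ▸ dvd_add (hβ.mul_right g) hg

end CoprimeIdeal

section QuadraticExtension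

open Module

variable {R S : Type*} [CommRing R] [CommRing S] [Algebra R S]

theorem dvd_coeffs_of_algebraMap_dvd {θ : S} (b : Basis (Fin 2) R S)
    (hb : b = ![θ, 1]) {d r s : R}
    (h : algebraMap R S d ∣ algebraMap R S r * θ + algebraMap R S s) : d ∣ r ∧ d ∣ s := by
  obtain ⟨x, hx⟩ := h
  have hrepr : r • b 0 + s • b 1 = d • x := by
    simpa [hb, Algebra.smul_def] using hx
  have hcoord (i : Fin 2) := congrArg (fun y ↦ b.repr y i) hrepr
  exact ⟨⟨b.repr x 0, by simpa using hcoord 0⟩, ⟨b.repr x 1, by simpa using hcoord 1⟩⟩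

theorem isUnit_of_dvd_coeffs_of_dvd_sub_one [IsLocalHom (algebraMap R S)] {n d x y : R}
    {e f : S} (h : algebraMap R S n ∣ x • e + y • f - 1) (hdx : d ∣ x) (hdy : d ∣ y)
    (hdn : d ∣ n) : IsUnit d := by
  have hmap {z : R} (hdz : d ∣ z) : algebraMap R S d ∣ algebraMap R S z := map_dvd _ hdz
  have hdxy : algebraMap R S d ∣ x • e + y • f := by
    rw [Algebra.smul_def, Algebra.smul_def]
    exact dvd_add ((hmap hdx).mul_right e) ((hmap hdy).mul_right f)
  have hd1 : algebraMap R S d ∣ 1 := (dvd_sub_right hdxy).1 ((hmap hdn).trans h)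
  exact (isUnit_of_dvd_one hd1).of_map

theorem restrictScalars_eq_span_pair_coe {J : Ideal S} (e : Basis (Fin 2) R J) :
    J.restrictScalars R = Submodule.span R {(e 0 : S), (e 1 : S)} := by
  ext z
  rw [Submodule.restrictScalars_mem, Basis.mem_ideal_iff' e, Submodule.mem_span_pair]
  simp only [Fin.sum_univ_two]
  exact ⟨fun ⟨c, hc⟩ ↦ ⟨c 0, c 1, hc.symm⟩, fun ⟨u, v, huv⟩ ↦ ⟨![u, v], huv.symm⟩⟩

theorem exists_span_pair_eq_of_isCoprime [IsDomain R] [IsPrincipalIdealRing R] [IsDomain S]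
    (b : Basis (Fin 2) R S) {J : Ideal S} (hJ : J ≠ ⊥) {n : R}
    (hcop : IsCoprime J (Ideal.span {algebraMap R S n})) :
    ∃ m l : S, l ≠ 0 ∧ algebraMap R S n ∣ l - 1 ∧
      J.restrictScalars R = Submodule.span R {m, l} := by
  have := Module.Free.of_basis b
  obtain ⟨g, hgJ, hg⟩ := isCoprime_span_singleton_iff.1 hcop
  let e := J.selfBasis b hJ
  have hspan := restrictScalars_eq_span_pair_coe e
  obtain ⟨x, y, hxy⟩ := Submodule.mem_span_pair.1 (hspan.le hgJ)
  obtain ⟨s, t, hst⟩ := exists_isCoprime_add_mul_add_mul fun d hdx hdy hdn ↦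
    isUnit_of_dvd_coeffs_of_dvd_sub_one (hxy ▸ hg) hdx hdy hdn
  have ⟨p, q, hpq⟩ := hst
  refine ⟨p • (e 1 : S) - q • (e 0 : S), (x + n * s) • (e 0 : S) + (y + n * t) • (e 1 : S),
    fun hl ↦ ?_, ?_, hspan.trans (span_pair_eq_of_mul_add_mul_eq_one _ _ hpq).symm⟩
  · have hl' : (x + n * s) • e 0 + (y + n * t) • e 1 = 0 := Subtype.ext hl
    have hcoord (i : Fin 2) := congrArg (fun w ↦ e.repr w i) hl'
    have hx : x + n * s = 0 := by simpa using hcoord 0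
    have hy : y + n * t = 0 := by simpa using hcoord 1
    exact hst.ne_zero_or_ne_zero.elim (· hx) (· hy)
  · have hl : (x + n * s) • (e 0 : S) + (y + n * t) • (e 1 : S) - 1 =
        (g - 1) + algebraMap R S n * (s • (e 0 : S) + t • (e 1 : S)) := by
      rw [← hxy]
      simp only [Algebra.smul_def, map_add, map_mul]
      ring
    exact hl ▸ dvd_add hg (dvd_mul_right _ _)

theorem exists_eq_mul_div_add_iff_of_spanSingleton_mul_eq {K : Type*} [Field K]
    [Algebra R K] [Algebra S K] [IsScalarTower R S K] [IsFractionRing S K]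
    {I : FractionalIdeal (nonZeroDivisors S) K} {J : Ideal S} {β m l : S}
    (hI : FractionalIdeal.spanSingleton (nonZeroDivisors S) (algebraMap S K β) * I = J)
    (hJ : J.restrictScalars R = Submodule.span R {m, l}) (hl : l ≠ 0) (x : K) :
    (∃ u v : R, x = algebraMap R K u * (algebraMap S K m / algebraMap S K l) + algebraMap R K v) ↔
      ∃ y ∈ I, x = algebraMap S K β / algebraMap S K l * y := by
  have hlK : algebraMap S K l ≠ 0 := (map_ne_zero_iff _ (IsFractionRing.injective S K)).2 hl
  have hcoe (u v : R) : algebraMap S K (u • m + v • l) =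
      algebraMap R K u * algebraMap S K m + algebraMap R K v * algebraMap S K l := by
    simp only [Algebra.smul_def, map_add, map_mul, ← IsScalarTower.algebraMap_apply R S K]
  constructor
  · rintro ⟨u, v, rfl⟩
    have hj : algebraMap S K (u • m + v • l) ∈ (J : FractionalIdeal (nonZeroDivisors S) K) :=
      FractionalIdeal.mem_coeIdeal_of_mem _ (hJ.ge (Submodule.mem_span_pair.2 ⟨u, v, rfl⟩))
    rw [← hI, FractionalIdeal.mem_singleton_mul] at hj
    obtain ⟨y, hy, hjy⟩ := hj
    refine ⟨y, hy, ?_⟩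
    field_simp
    rw [← hjy, hcoe]
    ring
  · rintro ⟨y, hy, rfl⟩
    have hβy : algebraMap S K β * y ∈ (J : FractionalIdeal (nonZeroDivisors S) K) :=
      hI ▸ FractionalIdeal.mul_mem_mul (FractionalIdeal.mem_spanSingleton_self _ _) hy
    obtain ⟨j, hj, hjy⟩ := (FractionalIdeal.mem_coeIdeal _).1 hβy
    obtain ⟨u, v, rfl⟩ := Submodule.mem_span_pair.1 (hJ.le hj)
    refine ⟨u, v, ?_⟩
    rw [hcoe] at hjy
    field_simp
    rw [← hjy]
    ring

end QuadraticExtension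

section FormRoot

open Module Matrix

variable {R K : Type*} [CommRing R] [Field K] [Algebra R K]

theorem isIntegral_leadingCoeff_mul_root {a b c : R} {ω : K}
    (h : algebraMap R K a * ω ^ 2 + algebraMap R K b * ω + algebraMap R K c = 0) :
    IsIntegral R (algebraMap R K a * ω) := by
  refine ⟨.X ^ 2 + .C b * .X + .C (a * c), by monicity!, ?_⟩
  simp only [Polynomial.eval₂_add, Polynomial.eval₂_mul, Polynomial.eval₂_pow,
    Polynomial.eval₂_X, Polynomial.eval₂_C, map_mul]
  linear_combination algebraMap R K a * h

/-- The matrix of multiplication by `a * ω + B` on the lattice with basis `(ω, 1)`, for `ω` a root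
of the quadratic form `(a, b, c)`. -/
def formMatrix (a b c B : R) : Matrix (Fin 2) (Fin 2) R :=
  !![B - b, -c; a, B]

theorem formMatrix_map_mulVec {a b c : R} (B : R) {ω : K}
    (h : algebraMap R K a * ω ^ 2 + algebraMap R K b * ω + algebraMap R K c = 0) :
    (formMatrix a b c B).map (algebraMap R K) *ᵥ ![ω, 1] =
      (algebraMap R K a * ω + algebraMap R K B) • ![ω, 1] := by
  ext i
  fin_cases i
  · suffices (algebraMap R K B - algebraMap R K b) * ω - algebraMap R K c =
        (algebraMap R K a * ω + algebraMap R K B) * ω by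
      simpa [formMatrix, Matrix.mulVec, dotProduct, sub_eq_add_neg] using this
    linear_combination -h
  · simp [formMatrix, Matrix.mulVec, dotProduct]

theorem discr_eq_of_mul_eq {A B C D t n : R} {θ ω : K} (hθ : LinearIndependent R ![θ, 1])
    (hmin : θ ^ 2 + algebraMap R K t * θ + algebraMap R K n = 0)
    (h1 : θ = algebraMap R K A * ω + algebraMap R K B)
    (hω : θ * ω = algebraMap R K C * ω + algebraMap R K D) :
    (B - C) ^ 2 - 4 * A * -D = t ^ 2 - 4 * n := by
  have hcoeff : B + C + t = 0 ∧ A * D - B * C + n = 0 := by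
    refine LinearIndependent.pair_iff.1 hθ _ _ ?_
    simp only [Algebra.smul_def, map_add, map_sub, map_mul]
    linear_combination hmin - (θ - algebraMap R K C) * h1 - algebraMap R K A * hω
  linear_combination (B + C - t) * hcoeff.1 + 4 * hcoeff.2

variable {S : Type*} [CommRing S] [Algebra R S] [Algebra S K] [IsScalarTower R S K]
  [IsIntegralClosure S R K]

theorem isUnit_of_dvd_form_coeffs [FaithfulSMul R K] {θ : S} (e : Basis (Fin 2) R S)
    (he : e = ![θ, 1]) {a b c B d : R} {ω : K} (ha : a ≠ 0)
    (hroot : algebraMap R K a * ω ^ 2 + algebraMap R K b * ω + algebraMap R K c = 0)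
    (hθ : algebraMap S K θ = algebraMap R K a * ω + algebraMap R K B)
    (hda : d ∣ a) (hdb : d ∣ b) (hdc : d ∣ c) : IsUnit d := by
  obtain ⟨a', rfl⟩ := hda
  obtain ⟨b', rfl⟩ := hdb
  obtain ⟨c', rfl⟩ := hdc
  simp only [map_mul] at hroot hθ
  have hd : algebraMap R K d ≠ 0 := by
    simpa using left_ne_zero_of_mul ha
  have hroot' : algebraMap R K a' * ω ^ 2 + algebraMap R K b' * ω + algebraMap R K c' = 0 :=
    mul_left_cancel₀ hd (by linear_combination hroot)
  obtain ⟨x, hx⟩ := (IsIntegralClosure.isIntegral_iff (A := S)).1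
    (isIntegral_leadingCoeff_mul_root hroot')
  have hdvd : algebraMap R S d ∣ algebraMap R S 1 * θ + algebraMap R S (-B) :=
    ⟨x, IsIntegralClosure.algebraMap_injective S R K <| by
      simp only [map_add, map_mul, map_neg, map_one, ← IsScalarTower.algebraMap_apply R S K, hx]
      linear_combination hθ⟩
  exact isUnit_of_dvd_one (dvd_coeffs_of_algebraMap_dvd e he hdvd).1

theorem exists_eq_leadingCoeff_mul_root_add [IsDomain R] [NeZero (2 : R)] {θ : S}
    (e : Basis (Fin 2) R S) (he : e = ![θ, 1]) {a b c t : R} {ω : K}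
    (hroot : algebraMap R K a * ω ^ 2 + algebraMap R K b * ω + algebraMap R K c = 0)
    (hθ : 2 * algebraMap R K a * ω + algebraMap R K b =
      2 * algebraMap S K θ + algebraMap R K t) :
    ∃ B : R, algebraMap S K θ = algebraMap R K a * ω + algebraMap R K B := by
  obtain ⟨x, hx⟩ := (IsIntegralClosure.isIntegral_iff (A := S)).1
    (isIntegral_leadingCoeff_mul_root hroot)
  have hx2 : 2 * (θ - x) = algebraMap R S (b - t) := by
    apply IsIntegralClosure.algebraMap_injective S R K
    simp only [map_mul, map_sub, map_ofNat, hx, ← IsScalarTower.algebraMap_apply R S K]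
    linear_combination -hθ
  have hcoord (y : S) : y = algebraMap R S (e.repr y 0) * θ + algebraMap R S (e.repr y 1) := by
    simpa [he, Algebra.smul_def] using (e.sum_repr y).symm
  set u := e.repr (θ - x) 0
  set v := e.repr (θ - x) 1
  have huv : θ - x = algebraMap R S u * θ + algebraMap R S v := hcoord _
  have hu : u = 0 := by
    have h2u : (2 * u : R) = 0 := zero_dvd_iff.1 (dvd_coeffs_of_algebraMap_dvd e he
      (s := 2 * v - (b - t)) ⟨0, by
        rw [map_sub, ← hx2, huv]
        simp only [map_mul, map_ofNat]
        ring⟩).1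
    simpa [two_ne_zero] using h2u
  refine ⟨v, ?_⟩
  have hK := congrArg (algebraMap S K) huv
  simp only [hu, map_zero, zero_mul, zero_add, map_sub, hx,
    ← IsScalarTower.algebraMap_apply R S K] at hK
  linear_combination hK

theorem exists_eq_leadingCoeff_mul_root_add_of_discr_eq [IsDomain R] [NeZero (2 : R)]
    {σ : K →+* ℂ} {τ : R →+* ℝ} (hστ : ∀ x, σ (algebraMap R K x) = τ x) {θ : S}
    (e : Basis (Fin 2) R S) (he : e = ![θ, 1]) (hθ : 0 < (σ (algebraMap S K θ)).im) {t n : R}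
    (hmin : algebraMap S K θ ^ 2 + algebraMap R K t * algebraMap S K θ + algebraMap R K n = 0)
    {a b c : R} {ω : K} (ha : 0 < τ a) (hdiscr : b ^ 2 - 4 * a * c = t ^ 2 - 4 * n)
    (hroot : algebraMap R K a * ω ^ 2 + algebraMap R K b * ω + algebraMap R K c = 0)
    (hω : 0 < (σ ω).im) :
    ∃ B : R, algebraMap S K θ = algebraMap R K a * ω + algebraMap R K B := by
  refine exists_eq_leadingCoeff_mul_root_add e he (t := t) hroot ?_
  simpa using two_mul_root_add_eq_of_discr_eq hστ (a' := 1) (b' := t) (c' := n)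
    (by simpa using hdiscr) hroot (by simpa using hmin) ha (by simp) hω hθ

theorem formMatrix_mul_eq_mul_formMatrix {a b c B a' b' c' B' : R} {ω ω' ν : K}
    {P : Matrix (Fin 2) (Fin 2) R} (hω' : LinearIndependent R ![ω', 1]) (hν : ν ≠ 0)
    (hroot : algebraMap R K a * ω ^ 2 + algebraMap R K b * ω + algebraMap R K c = 0)
    (hroot' : algebraMap R K a' * ω' ^ 2 + algebraMap R K b' * ω' + algebraMap R K c' = 0)
    (hθ : algebraMap R K a * ω + algebraMap R K B = algebraMap R K a' * ω' + algebraMap R K B')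
    (hP : P.map (algebraMap R K) *ᵥ (ν • ![ω', 1]) = ![ω, 1]) :
    formMatrix a b c B * P = P * formMatrix a' b' c' B' := by
  set M := (formMatrix a b c B).map (algebraMap R K) with hM
  set M' := (formMatrix a' b' c' B').map (algebraMap R K) with hM'
  set PK := P.map (algebraMap R K) with hPK
  set v := ![ω', 1]
  have hMv' := formMatrix_map_mulVec B' hroot'
  refine matrix_eq_of_map_mulVec_eq hω' (smul_right_injective _ hν ?_)
  simp only [Matrix.map_mul, ← hM, ← hM', ← hPK]
  calc ν • ((M * PK) *ᵥ v)
      = M *ᵥ (PK *ᵥ (ν • v)) := by rw [mulVec_mulVec, mulVec_smul]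
    _ = (algebraMap R K a' * ω' + algebraMap R K B') • (PK *ᵥ (ν • v)) := by
        rw [hP, formMatrix_map_mulVec B hroot, hθ]
    _ = ν • (PK *ᵥ (M' *ᵥ v)) := by
        rw [hMv', mulVec_smul, mulVec_smul, smul_comm]
    _ = ν • ((PK * M') *ᵥ v) := by rw [mulVec_mulVec]

theorem dvd_and_dvd_sub_one_of_mul_eq {θ α β : S} (e : Basis (Fin 2) R S) (he : e = ![θ, 1])
    {a B n r s : R} {ω : K} (hθ : algebraMap S K θ = algebraMap R K a * ω + algebraMap R K B)
    (h : algebraMap S K α * (algebraMap R K r * ω + algebraMap R K s) = algebraMap S K β)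
    (hβ : IsCoprime β (algebraMap R S n)) (hαβ : algebraMap R S n ∣ α - β)
    (ha : IsCoprime a n) : n ∣ r ∧ n ∣ s - 1 := by
  set y := algebraMap R S r * θ + algebraMap R S (a * (s - 1) - r * B)
  have hy : algebraMap S K y =
      algebraMap R K a * (algebraMap R K r * ω + algebraMap R K s - 1) := by
    simp only [y, map_add, map_mul, map_sub, map_one, hθ, ← IsScalarTower.algebraMap_apply R S K]
    ring
  have hαy : α * y = -(algebraMap R S a * (α - β)) := by
    apply IsIntegralClosure.algebraMap_injective S R K
    simp only [map_mul, map_neg, map_sub, hy, ← IsScalarTower.algebraMap_apply R S K]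
    linear_combination algebraMap R K a * h
  have hα : IsCoprime (algebraMap R S n) α := by
    obtain ⟨t, ht⟩ := hαβ
    exact (sub_eq_iff_eq_add'.1 ht ▸ hβ.add_mul_left_left t).symm
  have hny : algebraMap R S n ∣ y :=
    hα.dvd_of_dvd_mul_left (hαy ▸ (hαβ.mul_left _).neg_right)
  obtain ⟨hnr, hns⟩ := dvd_coeffs_of_algebraMap_dvd e he hny
  exact ⟨hnr, ha.symm.dvd_of_dvd_mul_left ((dvd_sub_left (hnr.mul_right B)).1 hns)⟩

theorem exists_basis_eq_pair_one {θ : S} (hθ : LinearIndependent R ![algebraMap S K θ, 1])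
    (hgen : ∀ x : S, ∃ u v : R,
      algebraMap S K x = algebraMap R K u * algebraMap S K θ + algebraMap R K v) :
    ∃ e : Basis (Fin 2) R S, e = ![θ, 1] := by
  have hli : LinearIndependent R ![θ, 1] := by
    refine LinearIndependent.of_comp (IsScalarTower.toAlgHom R S K).toLinearMap ?_
    convert hθ using 1
    ext i
    fin_cases i <;> simp
  refine ⟨Basis.mk hli fun x _ ↦ ?_, Basis.coe_mk _ _⟩
  obtain ⟨u, v, huv⟩ := hgen x
  rw [Matrix.range_cons_cons_empty, Submodule.mem_span_pair]
  refine ⟨u, v, IsIntegralClosure.algebraMap_injective S R K ?_⟩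
  simp [huv, Algebra.smul_def, ← IsScalarTower.algebraMap_apply R S K]

theorem exists_pos_im_div_of_ideal_eq_span_pair {σ : K →+* ℂ} {τ : R →+* ℝ}
    (hστ : ∀ x, σ (algebraMap R K x) = τ x) {θ : S} (hθ : (σ (algebraMap S K θ)).im ≠ 0)
    {J : Ideal S} {m l : S} (hl : l ≠ 0)
    (hJ : J.restrictScalars R = Submodule.span R {m, l}) :
    ∃ m' : S, J.restrictScalars R = Submodule.span R {m', l} ∧
      0 < (σ (algebraMap S K m' / algebraMap S K l)).im := by
  have hlK : algebraMap S K l ≠ 0 :=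
    (map_ne_zero_iff _ (IsIntegralClosure.algebraMap_injective S R K)).2 hl
  have hlJ : l ∈ J.restrictScalars R := hJ ▸ Submodule.subset_span (by simp)
  obtain ⟨A, B, hAB⟩ := Submodule.mem_span_pair.1 (hJ.le (J.mul_mem_left θ hlJ))
  have hθ' : algebraMap S K θ =
      algebraMap R K A * (algebraMap S K m / algebraMap S K l) + algebraMap R K B := by
    have hABK := congrArg (algebraMap S K) hAB
    simp only [Algebra.smul_def, map_add, map_mul, ← IsScalarTower.algebraMap_apply R S K] at hABK
    field_simp
    linear_combination -hABK
  have him : (σ (algebraMap S K m / algebraMap S K l)).im ≠ 0 := fun h0 ↦ hθ <| by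
    rw [hθ', im_map_algebraMap_mul_add hστ, h0, mul_zero]
  rcases him.lt_or_gt with hneg | hpos
  · refine ⟨-m, hJ.trans ?_, by simpa [neg_div] using hneg⟩
    simpa using (span_pair_eq_of_mul_add_mul_eq_one (R := R) m l (p := 0) (q := 1) (x := 0) (y := 1)
      (by simp)).symm
  · exact ⟨m, hJ, hpos⟩

theorem isUnit_of_dvd_of_mul_eq {θ m l : S} (e : Basis (Fin 2) R S) (he : e = ![θ, 1])
    {A B d n : R} (hl : algebraMap R S n ∣ l - 1)
    (h : θ * l = algebraMap R S A * m + algebraMap R S B * l) (hdA : d ∣ A) (hdn : d ∣ n) :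
    IsUnit d := by
  have hmap {z : R} (hdz : d ∣ z) : algebraMap R S d ∣ algebraMap R S z := map_dvd _ hdz
  have hdvd : algebraMap R S d ∣ algebraMap R S 1 * θ + algebraMap R S (-B) := by
    have hsplit : algebraMap R S 1 * θ + algebraMap R S (-B) =
        algebraMap R S A * m - (l - 1) * (θ - algebraMap R S B) := by
      rw [map_one, map_neg]
      linear_combination h
    rw [hsplit]
    exact dvd_sub ((hmap hdA).mul_right m) (((hmap hdn).trans hl).mul_right _)
  exact isUnit_of_dvd_one (dvd_coeffs_of_algebraMap_dvd e he hdvd).1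

end FormRoot

section NumberField

open Module Matrix

theorem iota_eq_algebraMap {F K : Type} [Field F] [Field K] [NumberField F] [Algebra F K]
    (u : 𝓞 F) : iota F K u = algebraMap (𝓞 F) K u := rfl

variable {F K : Type} [Field F] [Field K] [NumberField F] [NumberField K] [Algebra F K]

theorem formAct_of_formMatrix_mul_eq {a b c B a' b' c' B' : 𝓞 F}
    {P : Matrix (Fin 2) (Fin 2) (𝓞 F)}
    (h : formMatrix a b c B * P = P * formMatrix a' b' c' B') :
    FormAct F P a b c a' b' c' := by
  have h00 := congrFun₂ h 0 0
  have h01 := congrFun₂ h 0 1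
  have h10 := congrFun₂ h 1 0
  have h11 := congrFun₂ h 1 1
  simp only [formMatrix, mul_apply, Fin.sum_univ_two, of_apply, cons_val', cons_val_zero,
    cons_val_one, cons_val_fin_one] at h00 h01 h10 h11
  rw [FormAct, det_fin_two]
  refine ⟨?_, ?_, ?_⟩
  · linear_combination (P 1 0) * h00 - (P 0 0) * h10
  · linear_combination (P 1 1) * h00 - (P 0 1) * h10 + (P 1 0) * h01 - (P 0 0) * h11
  · linear_combination (P 1 1) * h01 - (P 0 1) * h11

section FormClasses

variable {τ : F →+* ℝ} {σ : K →+* ℂ} {bK cK : 𝓞 F} {N : ℕ} {θ : 𝓞 K}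

theorem isFormN_and_isFormRoot_of_mul_eq (hστ : ∀ x : F, σ (algebraMap F K x) = τ x)
    (e : Basis (Fin 2) (𝓞 F) (𝓞 K)) (he : e = ![θ, 1]) (hθ : 0 < (σ θ).im)
    (hmin : (θ : K) ^ 2 + iota F K bK * θ + iota F K cK = 0) {A B C D : 𝓞 F} {m l : 𝓞 K}
    (hl0 : l ≠ 0) (hl : (N : 𝓞 K) ∣ l - 1) (hθl : A • m + B • l = θ * l)
    (hθm : C • m + D • l = θ * m) (hω : 0 < (σ (m / l)).im) :
    IsFormN F τ N (bK ^ 2 - 4 * cK) A (B - C) (-D) ∧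
      IsFormRoot F K σ A (B - C) (-D) (m / l) := by
  have hστ' (x : 𝓞 F) : σ (algebraMap (𝓞 F) K x) = τ.comp (algebraMap (𝓞 F) F) x := hστ x
  have hlK : (l : K) ≠ 0 := RingOfIntegers.coe_ne_zero_iff.2 hl0
  have hcoe {u v : 𝓞 F} {x : 𝓞 K} (h : u • m + v • l = θ * x) :
      algebraMap (𝓞 F) K u * m + algebraMap (𝓞 F) K v * l = θ * x := by
    have hK := congrArg (algebraMap (𝓞 K) K) h
    simpa only [Algebra.smul_def, map_add, map_mul,
      ← IsScalarTower.algebraMap_apply (𝓞 F) (𝓞 K) K] using hK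
  have h1 : (θ : K) = algebraMap (𝓞 F) K A * (m / l) + algebraMap (𝓞 F) K B := by
    field_simp
    linear_combination -hcoe hθl
  have h2 : θ * (m / l : K) = algebraMap (𝓞 F) K C * (m / l) + algebraMap (𝓞 F) K D := by
    field_simp
    linear_combination -hcoe hθm
  have hroot : algebraMap (𝓞 F) K A * (m / l) ^ 2 + algebraMap (𝓞 F) K (B - C) * (m / l) +
      algebraMap (𝓞 F) K (-D) = 0 := by
    rw [map_sub, map_neg]
    linear_combination h2 - (m / l : K) * h1
  have hA : 0 < τ A := by
    have him := im_map_algebraMap_mul_add hστ' A B (m / l : K)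
    rw [← h1] at him
    exact pos_of_mul_pos_left (him ▸ hθ) hω.le
  have hA0 : A ≠ 0 := by
    rintro rfl
    simp at hA
  refine ⟨⟨fun d ↦ isUnit_of_dvd_form_coeffs e he hA0 hroot h1, hA, ?_, fun d ↦ ?_⟩, hroot, hω⟩
  · exact discr_eq_of_mul_eq (linearIndependent_pair_one_of_im_ne_zero hστ' hθ.ne') hmin h1 h2
  · refine isUnit_of_dvd_of_mul_eq (m := m) (B := B) e he (by simpa using hl) ?_
    rw [← hθl, Algebra.smul_def, Algebra.smul_def]

theorem exists_isFormN_lattice_eq_mul [IsPrincipalIdealRing (𝓞 F)]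
    (hστ : ∀ x : F, σ (algebraMap F K x) = τ x)
    (e : Basis (Fin 2) (𝓞 F) (𝓞 K)) (he : e = ![θ, 1]) (hθ : 0 < (σ θ).im)
    (hmin : (θ : K) ^ 2 + iota F K bK * θ + iota F K cK = 0)
    {I : FractionalIdeal (nonZeroDivisors (𝓞 K)) K} (hI0 : I ≠ 0) (hI : CoprimeToN K N I) :
    ∃ (a b c : 𝓞 F) (ω ν : K), IsFormN F τ N (bK ^ 2 - 4 * cK) a b c ∧
      IsFormRoot F K σ a b c ω ∧ ν ≠ 0 ∧ MulCongOne K N ν ∧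
      ∀ x : K, (∃ u v : 𝓞 F, x = iota F K u * ω + iota F K v) ↔
        ∃ y : K, y ∈ (I : Submodule (𝓞 K) K) ∧ x = ν * y := by
  have hστ' (x : 𝓞 F) : σ (algebraMap (𝓞 F) K x) = τ.comp (algebraMap (𝓞 F) F) x := hστ x
  obtain ⟨b₁, b₂, hb₁, hb₂, hIb⟩ := hI
  obtain ⟨β, J, hβ0, hβ, hJN, hIJ⟩ := exists_spanSingleton_mul_eq_coeIdeal hb₁ hb₂ hIb
  have hβK : (β : K) ≠ 0 := RingOfIntegers.coe_ne_zero_iff.2 hβ0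
  have hJ0 : J ≠ ⊥ := by
    rintro rfl
    simp [hI0, hβ0, FractionalIdeal.spanSingleton_eq_zero_iff] at hIJ
  obtain ⟨m₀, l, hl0, hl, hm₀⟩ :=
    exists_span_pair_eq_of_isCoprime e hJ0 (n := (N : 𝓞 F)) (by simpa using hJN)
  have hlK : (l : K) ≠ 0 := RingOfIntegers.coe_ne_zero_iff.2 hl0
  rw [map_natCast] at hl
  obtain ⟨m, hm, hω⟩ := exists_pos_im_div_of_ideal_eq_span_pair hστ' hθ.ne' hl0 hm₀
  have hcoords {x : 𝓞 K} (hx : x ∈ J.restrictScalars (𝓞 F)) : ∃ u v : 𝓞 F, u • m + v • l = θ * x :=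
    Submodule.mem_span_pair.1 (hm.le (J.mul_mem_left θ hx))
  obtain ⟨A, B, hθl⟩ := hcoords (hm.ge (Submodule.subset_span (by simp)) : l ∈ _)
  obtain ⟨C, D, hθm⟩ := hcoords (hm.ge (Submodule.subset_span (by simp)) : m ∈ _)
  obtain ⟨hform, hroot⟩ := isFormN_and_isFormRoot_of_mul_eq hστ e he hθ hmin hl0 hl hθl hθm hω
  refine ⟨A, B - C, -D, m / l, β / l, hform, hroot, div_ne_zero hβK hlK, ⟨β, l, hlK, ?_, rfl, ?_⟩,
    exists_eq_mul_div_add_iff_of_spanSingleton_mul_eq hIJ hm hl0⟩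
  · exact isCoprime_span_singleton_iff.2 ⟨l, Ideal.mem_span_singleton_self l, hl⟩
  · simpa using dvd_sub hβ hl

theorem exists_isGammaN_formAct_of_lattice_eq_mul [IsPrincipalIdealRing (𝓞 F)]
    (hστ : ∀ x : F, σ (algebraMap F K x) = τ x)
    (e : Basis (Fin 2) (𝓞 F) (𝓞 K)) (he : e = ![θ, 1]) (hθ : 0 < (σ θ).im)
    (hmin : (θ : K) ^ 2 + iota F K bK * θ + iota F K cK = 0)
    {a b c a' b' c' : 𝓞 F} {ω ω' ν : K} (hQ : IsFormN F τ N (bK ^ 2 - 4 * cK) a b c)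
    (hQ' : IsFormN F τ N (bK ^ 2 - 4 * cK) a' b' c') (hω : IsFormRoot F K σ a b c ω)
    (hω' : IsFormRoot F K σ a' b' c' ω') (hν : MulCongOne K N ν)
    (hL : ∀ x : K, (∃ u v : 𝓞 F, x = iota F K u * ω + iota F K v) ↔
      ∃ u v : 𝓞 F, x = ν * (iota F K u * ω' + iota F K v)) :
    ∃ γ : Matrix (Fin 2) (Fin 2) (𝓞 F), IsGammaN F τ N γ ∧ FormAct F γ a b c a' b' c' := by
  have hστ' (x : 𝓞 F) : σ (algebraMap (𝓞 F) K x) = τ.comp (algebraMap (𝓞 F) F) x := hστ x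
  obtain ⟨-, ha, hdiscr, -⟩ := hQ
  obtain ⟨-, ha', hdiscr', haN'⟩ := hQ'
  obtain ⟨hroot, hωim⟩ := hω
  obtain ⟨hroot', hωim'⟩ := hω'
  obtain ⟨α, β, hβ0, hβN, rfl, hαβ⟩ := hν
  obtain ⟨B, hB⟩ := exists_eq_leadingCoeff_mul_root_add_of_discr_eq hστ' e he hθ hmin ha hdiscr
    hroot hωim
  obtain ⟨B', hB'⟩ := exists_eq_leadingCoeff_mul_root_add_of_discr_eq hστ' e he hθ hmin ha' hdiscr'
    hroot' hωim'
  obtain ⟨P, hPdet, hP⟩ := exists_isUnit_det_map_mulVec_eq_of_span_eq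
    (linearIndependent_pair_one_of_im_ne_zero hστ' hωim.ne') (span_range_pair_one_eq hL)
  obtain ⟨-, hP1⟩ := mul_add_eq_of_map_mulVec_smul_eq hP
  have hcongr : (N : 𝓞 F) ∣ P 1 0 ∧ (N : 𝓞 F) ∣ P 1 1 - 1 := by
    refine dvd_and_dvd_sub_one_of_mul_eq e he hB' (α := α) (β := β) ?_ ?_ ?_ ?_
    · field_simp at hP1
      exact hP1
    · simpa using (Ideal.isCoprime_span_singleton_iff _ _).1 hβN
    · simpa using hαβ
    · exact IsRelPrime.isCoprime haN'
  refine ⟨P, ⟨hPdet, det_pos_of_map_mulVec_smul_eq hστ' hωim hωim' hP, hcongr.1, 1, hcongr.2⟩,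
    formAct_of_formMatrix_mul_eq (B := B) (B' := B') ?_⟩
  exact formMatrix_mul_eq_mul_formMatrix (linearIndependent_pair_one_of_im_ne_zero hστ' hωim'.ne')
    (left_ne_zero_of_mul_eq_one hP1) hroot hroot' (hB ▸ hB') hP

end FormClasses

end NumberField

theorem stmt10_general (F K : Type) [Field F] [Field K] [NumberField F] [NumberField K]
    [Algebra F K] [IsPrincipalIdealRing (𝓞 F)] (τ : F →+* ℝ) (σ : K →+* ℂ)
    (hcompat : ∀ x : F, σ (algebraMap F K x) = (τ x : ℂ)) (ωK : K) (hωKim : 0 < (σ ωK).im)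
    (hgen : ∀ x : 𝓞 K, ∃ u v : 𝓞 F, (x : K) = iota F K u * ωK + iota F K v)
    (bK cK : 𝓞 F) (hmin : ωK ^ 2 + iota F K bK * ωK + iota F K cK = 0)
    (dK : 𝓞 F) (hdK : dK = bK ^ 2 - 4 * cK) (N : ℕ) :
    (∀ I : FractionalIdeal (nonZeroDivisors (𝓞 K)) K, I ≠ 0 → CoprimeToN K N I →
      ∃ (a b c : 𝓞 F) (ω : K) (ν : K), IsFormN F τ N dK a b c ∧
        IsFormRoot F K σ a b c ω ∧ ν ≠ 0 ∧ MulCongOne K N ν ∧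
        ∀ x : K, (∃ u v : 𝓞 F, x = iota F K u * ω + iota F K v) ↔
          (∃ y : K, y ∈ (I : Submodule (𝓞 K) K) ∧ x = ν * y)) ∧
    (∀ (a b c a' b' c' : 𝓞 F) (ω ω' ν : K), IsFormN F τ N dK a b c →
      IsFormN F τ N dK a' b' c' → IsFormRoot F K σ a b c ω →
      IsFormRoot F K σ a' b' c' ω' → MulCongOne K N ν →
      (∀ x : K, (∃ u v : 𝓞 F, x = iota F K u * ω + iota F K v) ↔
        (∃ u v : 𝓞 F, x = ν * (iota F K u * ω' + iota F K v))) →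
      ∃ γ : Matrix (Fin 2) (Fin 2) (𝓞 F),
        IsGammaN F τ N γ ∧ FormAct F γ a b c a' b' c') := by
  subst hdK
  have hωKint : IsIntegral (𝓞 F) ωK := by
    have hroot : algebraMap (𝓞 F) K 1 * ωK ^ 2 + algebraMap (𝓞 F) K bK * ωK +
        algebraMap (𝓞 F) K cK = 0 := by
      simpa only [map_one, one_mul, iota_eq_algebraMap] using hmin
    simpa only [map_one, one_mul] using isIntegral_leadingCoeff_mul_root hroot
  obtain ⟨θ, rfl⟩ := (IsIntegralClosure.isIntegral_iff (A := 𝓞 K)).1 hωKint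
  have hli : LinearIndependent (𝓞 F) ![(θ : K), 1] :=
    linearIndependent_pair_one_of_im_ne_zero (τ := τ.comp (algebraMap (𝓞 F) F))
      (fun x ↦ hcompat x) hωKim.ne'
  obtain ⟨e, he⟩ := exists_basis_eq_pair_one hli hgen
  exact ⟨fun I ↦ exists_isFormN_lattice_eq_mul hcompat e he hωKim hmin,
    fun a b c a' b' c' ω ω' ν ↦
      exists_isGammaN_formAct_of_lattice_eq_mul hcompat e he hωKim hmin⟩

/-- the map `φ_{K,N} : C_F(N,d_K) → C(N·O_K)`, `[Q] ↦ [[ω_Q,1]_F]`,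
is surjective; together with its injectivity it is a bijection onto the ray
class group. -/
theorem stmt10 (F K : Type) [Field F] [Field K] [NumberField F] [NumberField K]
    [Algebra F K] (τ : F →+* ℝ) (σ : K →+* ℂ)
    (hcompat : ∀ x : F, σ (algebraMap F K x) = (τ x : ℂ))
    (hF_totallyReal : ∀ φ : F →+* ℂ, ∀ x : F, (φ x).im = 0)
    (hquadratic : Module.finrank F K = 2)
    (hclass : NumberField.classNumber F = 1)
    (ωK : K) (hωKint : IsIntegral ℤ ωK) (hωKim : 0 < (σ ωK).im)
    (hgen : ∀ x : 𝓞 K, ∃ u v : 𝓞 F, (x : K) = iota F K u * ωK + iota F K v)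
    (bK cK : 𝓞 F) (hmin : ωK ^ 2 + iota F K bK * ωK + iota F K cK = 0)
    (dK : 𝓞 F) (hdK : dK = bK ^ 2 - 4 * cK)
    (N : ℕ) (hN : 0 < N) :
    -- surjectivity: every ray class modulo N·O_K contains an ideal of the
    -- form [ω_Q, 1]_F for some Q ∈ Q_F(N, d_K)
    (∀ I : FractionalIdeal (nonZeroDivisors (𝓞 K)) K, I ≠ 0 → CoprimeToN K N I →
      ∃ (a b c : 𝓞 F) (ω : K) (ν : K), IsFormN F τ N dK a b c ∧
        IsFormRoot F K σ a b c ω ∧ ν ≠ 0 ∧ MulCongOne K N ν ∧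
        ∀ x : K, (∃ u v : 𝓞 F, x = iota F K u * ω + iota F K v) ↔
          (∃ y : K, y ∈ (I : Submodule (𝓞 K) K) ∧ x = ν * y)) ∧
    -- injectivity: two forms whose associated ideals lie in the same ray class
    -- are Γ_{F,1}(N)-equivalent
    (∀ (a b c a' b' c' : 𝓞 F) (ω ω' ν : K), IsFormN F τ N dK a b c →
      IsFormN F τ N dK a' b' c' → IsFormRoot F K σ a b c ω →
      IsFormRoot F K σ a' b' c' ω' → ν ≠ 0 → MulCongOne K N ν →
      (∀ x : K, (∃ u v : 𝓞 F, x = iota F K u * ω + iota F K v) ↔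
        (∃ u v : 𝓞 F, x = ν * (iota F K u * ω' + iota F K v))) →
      ∃ γ : Matrix (Fin 2) (Fin 2) (𝓞 F),
        IsGammaN F τ N γ ∧ FormAct F γ a b c a' b' c') := by
  have : IsPrincipalIdealRing (𝓞 F) := NumberField.classNumber_eq_one_iff.1 hclass
  exact (stmt10_general F K τ σ hcompat ωK hωKim hgen bK cK hmin dK hdK N).imp_right
    fun hinj _ _ _ _ _ _ _ _ _ hQ hQ' hω hω' _ ↦ hinj _ _ _ _ _ _ _ _ _ hQ hQ' hω hω'
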